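/- Let q be a prime power, δ ≥ 2, and let n, k, r be positive integers with r | k, m := r + δ - 1 dividing n, (k/r)m ≤ n, and n | (q-1). Let α ∈ F_q be a primitive n-th root of unity and let C be the cyclic code of length n over F_q with defining set of zeros L ∪ D, where L = {i + lm : l = 0,…,n/m - 1, i = 1,…,δ-1} and D = {1, 2, …, n - k - ((k/r) - 1)(δ-1)}. Then dim C = k, C has (r,δ) locality, and the minimum distance of C equals n - k + δ - (k/r)(δ-1), i.e., C attains the bound d ≤ n - k + δ - ⌈k/r⌉(δ-1) with equality. -/

import Mathlib

/-!
Write `m = r + δ - 1`, `n = m * ν`, `k = r * u` with `u ≤ ν`, and let `L`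
(all exponents in `1, …, δ - 1` modulo `m`) and `D` (an initial interval) be the two parts of `Z`.
Three facts carry the proof.

* BCH bound (`bch_bound`): a word orthogonal to the powers `1, …, w` of distinct nonzero locators
  has weight at least `w + 1`.  With the zeros `D` this gives the lower bound on the distance, and
  with `w = n` it shows that the discrete Fourier transform is injective, so that the dimension of
  the code is the number of non-zeros (`finrank_zeroCode`), which is `u * r = k`.
* Averaging the checks in `L` with a character of order `ν` isolates the residue class of a
  coordinate modulo `ν` (`coset_check`).  On such a class the code therefore satisfies `δ - 1`
  consecutive power checks; the BCH bound yields local distance `δ`, hence the locality.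
* Since the code has dimension `k`, some nonzero codeword vanishes at `k - 1` prescribed
  coordinates: `r` in each of `u - 1` residue classes and `r - 1` in one further class.  By the
  local distance it vanishes on the first `u - 1` classes entirely, so its weight is at most
  `(ν - u) * m + δ`, which is the lower bound.
-/

open Polynomial Finset

attribute [local instance 10] Classical.propDecidable

noncomputable section

namespace LRC

variable (F : Type) [Field F]

/-- The linear functional `c ↦ ∑ i, c i * α ^ (i * t)` (evaluation at `α ^ t`). -/
def evalMap (n : ℕ) (α : F) (t : ℕ) : (Fin n → F) →ₗ[F] F :=
  ∑ i : Fin n, α ^ ((i : ℕ) * t) • LinearMap.proj i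

/-- The cyclic code of length `n` with defining set of zeros `Z`
(`α` a primitive `n`-th root of unity). -/
def zeroCode (n : ℕ) (α : F) (Z : Set ℕ) : Submodule F (Fin n → F) :=
  ⨅ t ∈ Z, LinearMap.ker (evalMap F n α t)

/-- The polynomial `∑ i, c i • X ^ i` associated with a vector. -/
def polyEncode (n : ℕ) : (Fin n → F) →ₗ[F] Polynomial F :=
  ∑ i : Fin n, (LinearMap.proj i).smulRight (Polynomial.X ^ (i : ℕ))

/-- The cyclic code of length `n` generated by the polynomial `g`. -/
def genCode (n : ℕ) (g : Polynomial F) : Submodule F (Fin n → F) where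
  carrier := {c | g ∣ polyEncode F n c}
  add_mem' := fun {a b} ha hb => by
    simp only [Set.mem_setOf_eq, map_add] at *
    exact dvd_add ha hb
  zero_mem' := by simp only [Set.mem_setOf_eq, map_zero, dvd_zero]
  smul_mem' := fun a c hc => by
    simp only [Set.mem_setOf_eq, map_smul, Polynomial.smul_eq_C_mul] at *
    exact hc.mul_left _

/-- The punctured (restricted) code of `C` on the coordinate set `S`. -/
def punctured {ι : Type} [Fintype ι] (C : Submodule F (ι → F)) (S : Finset ι) :
    Submodule F (↥S → F) :=
  C.map (LinearMap.funLeft F F (Subtype.val : ↥S → ι))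

/-- The minimum distance of a (linear) code is at least `δ`. -/
def minDistGE {ι : Type} [Fintype ι] (C : Set (ι → F)) (δ : ℕ) : Prop :=
  ∀ c ∈ C, c ≠ 0 → δ ≤ hammingNorm c

/-- The minimum distance of a (linear) code equals `d`. -/
def minDistEq {ι : Type} [Fintype ι] (C : Set (ι → F)) (d : ℕ) : Prop :=
  minDistGE F C d ∧ ∃ c ∈ C, c ≠ 0 ∧ hammingNorm c = d

/-- Locality `r`: each coordinate is a linear function of some `r` other coordinates. -/
def HasLocality {n : ℕ} (C : Set (Fin n → F)) (r : ℕ) : Prop :=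
  ∀ i : Fin n, ∃ I : Finset (Fin n), i ∉ I ∧ I.card = r ∧
    ∃ a : Fin n → F, (∀ j ∉ I, a j = 0) ∧ ∀ c ∈ C, c i = ∑ j, a j * c j

/-- `(r, δ)` locality: every coordinate lies in a set of at most `r + δ - 1` coordinates on
which the punctured code has minimum distance at least `δ`. -/
def HasLocalityRD {ι : Type} [Fintype ι] (C : Submodule F (ι → F)) (r δ : ℕ) : Prop :=
  ∀ i : ι, ∃ J : Finset ι, i ∈ J ∧ J.card ≤ r + δ - 1 ∧
    minDistGE F (punctured F C J : Set (↥J → F)) δ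

end LRC

namespace LRC

/-! ### The BCH bound and the dimension of a cyclic code -/

/-- A word whose locators `x j` are distinct and nonzero on `S` and which satisfies the power
checks `1, …, w` on `S` has more than `w` nonzero entries there, unless it vanishes on `S`. -/
lemma bch_bound {F ι : Type} [Field F] (S : Finset ι) (x c : ι → F)
    (hinj : ∀ i ∈ S, ∀ j ∈ S, x i = x j → i = j) (hx : ∀ j ∈ S, x j ≠ 0) (w : ℕ)
    (h : ∀ s, 1 ≤ s → s ≤ w → ∑ j ∈ S, c j * x j ^ s = 0)
    (j₀ : ι) (hj₀ : j₀ ∈ S) (hc : c j₀ ≠ 0) :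
    w + 1 ≤ (S.filter fun j => c j ≠ 0).card := by
  by_contra! hlt
  set T := (S.filter fun j => c j ≠ 0).erase j₀ with hT
  have hTcard : T.card + 1 ≤ w := by
    have h1 : j₀ ∈ S.filter fun j => c j ≠ 0 := by simp [hj₀, hc]
    have h2 : T.card + 1 = _ := Finset.card_erase_add_one h1
    omega
  -- `P` has degree at most `w`, no constant term, and vanishes on the support except at `j₀`.
  set P : F[X] := (∏ j ∈ T, (X - C (x j))) with hP
  have hdeg : P.natDegree = T.card := by
    rw [hP, natDegree_prod_of_monic _ _ fun j _ => monic_X_sub_C _]; simp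
  have hsum : ∑ j ∈ S, c j * (x j * P.eval (x j)) = 0 := by
    have : ∀ j, c j * (x j * P.eval (x j))
        = ∑ e ∈ range (T.card + 1), P.coeff e * (c j * x j ^ (e + 1)) := by
      intro j
      rw [eval_eq_sum_range, hdeg, mul_sum, mul_sum]
      exact sum_congr rfl fun e _ => by ring
    simp_rw [this]
    rw [sum_comm]
    refine sum_eq_zero fun e he => ?_
    rw [← mul_sum, h (e + 1) (by omega) (by have := mem_range.1 he; omega), mul_zero]
  rw [sum_eq_single j₀] at hsum
  · have hne : P.eval (x j₀) ≠ 0 := by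
      rw [hP, eval_prod, prod_ne_zero_iff]
      intro j hj
      rw [eval_sub, eval_X, eval_C, sub_ne_zero]
      intro he
      have hjS : j ∈ S := (mem_filter.1 (mem_of_mem_erase hj)).1
      exact (ne_of_mem_erase hj) (hinj _ hj₀ _ hjS he).symm
    exact (mul_ne_zero hc (mul_ne_zero (hx _ hj₀) hne)) hsum
  · intro j hj hne
    by_cases hcj : c j = 0
    · simp [hcj]
    · have : P.eval (x j) = 0 := by
        rw [hP, eval_prod]
        exact prod_eq_zero (i := j) (by simp [hT, hj, hne, hcj]) (by simp)
      simp [this]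
  · exact fun hn => absurd hj₀ hn

lemma mem_zeroCode {F : Type} [Field F] {n : ℕ} {α : F} {Z : Set ℕ} {c : Fin n → F} :
    c ∈ zeroCode F n α Z ↔ ∀ t ∈ Z, ∑ j : Fin n, c j * (α ^ (j : ℕ)) ^ t = 0 := by
  simp only [zeroCode, evalMap, Submodule.mem_iInf, LinearMap.mem_ker, LinearMap.sum_apply,
    LinearMap.smul_apply, LinearMap.proj_apply, smul_eq_mul, pow_mul, mul_comm (c _)]

/-- The dimension of a cyclic code is the number of non-zeros.  Exponents are represented by
`1, …, n` instead of `0, …, n - 1`. -/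
lemma finrank_zeroCode {F : Type} [Field F] {n : ℕ} {α : F}
    (hα : IsPrimitiveRoot α n) (hn : 0 < n) (Z : Set ℕ) (hZ : ∀ t ∈ Z, 1 ≤ t ∧ t ≤ n) :
    Module.finrank F (zeroCode F n α Z)
      = ((univ : Finset (Fin n)).filter fun t : Fin n => (t : ℕ) + 1 ∉ Z).card := by
  let Φ : (Fin n → F) →ₗ[F] (Fin n → F) := LinearMap.pi fun t => evalMap F n α ((t : ℕ) + 1)
  have hΦ : ∀ c t, Φ c t = ∑ j : Fin n, c j * (α ^ (j : ℕ)) ^ ((t : ℕ) + 1) := by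
    intro c t
    simp only [Φ, evalMap, LinearMap.pi_apply, LinearMap.sum_apply, LinearMap.smul_apply,
      LinearMap.proj_apply, smul_eq_mul, pow_mul, mul_comm (c _)]
  have hinj : Function.Injective Φ := by
    rw [injective_iff_map_eq_zero]
    intro c hc
    by_contra hne
    obtain ⟨j₀, hj₀⟩ := Function.ne_iff.1 hne
    have := bch_bound univ (fun j : Fin n => α ^ (j : ℕ)) c
      (fun i _ j _ hij => Fin.ext (hα.pow_inj i.2 j.2 hij))
      (fun j _ => pow_ne_zero _ (hα.ne_zero hn.ne')) n
      (fun s h1 h2 => by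
        have := hΦ c ⟨s - 1, by omega⟩
        rw [hc] at this
        simpa [Nat.sub_add_cancel h1] using this.symm) j₀ (mem_univ _) hj₀
    have h2 := card_filter_le (univ : Finset (Fin n)) (fun j => c j ≠ 0)
    simp only [card_univ, Fintype.card_fin] at h2
    omega
  let e : (Fin n → F) ≃ₗ[F] (Fin n → F) := LinearEquiv.ofInjectiveEndo Φ hinj
  let I : Set (Fin n) := {t | (t : ℕ) + 1 ∉ Z}
  let W : Submodule F (Fin n → F) := ⨅ t ∈ Iᶜ, LinearMap.ker (LinearMap.proj t)
  have hmap : zeroCode F n α Z = W.comap (e : (Fin n → F) →ₗ[F] (Fin n → F)) := by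
    ext c
    have he : ∀ t, e c t = ∑ j : Fin n, c j * (α ^ (j : ℕ)) ^ ((t : ℕ) + 1) := hΦ c
    simp only [mem_zeroCode, W, Submodule.mem_comap, Submodule.mem_iInf, LinearMap.mem_ker,
      LinearMap.proj_apply, LinearEquiv.coe_coe, he]
    constructor
    · intro h t ht
      exact h _ (by simpa [I] using ht)
    · intro h t ht
      have h1 := hZ t ht
      have := h ⟨t - 1, by omega⟩ (by simpa [I, Nat.sub_add_cancel h1.1] using ht)
      simpa [Nat.sub_add_cancel h1.1] using this
  rw [hmap, (e.submoduleMap _).finrank_eq, Submodule.map_comap_eq_of_surjective e.surjective,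
    (LinearMap.iInfKerProjEquiv F (fun _ : Fin n => F) (I := I) (J := Iᶜ)
      disjoint_compl_right (by simp)).finrank_eq, Module.finrank_fintype_fun_eq_card,
    Fintype.card_subtype]
  rfl

/-! ### Residue classes of coordinates and of exponents -/

/-- The checks at `s + l * m`, `l < ν`, combine to a single check at `s` supported on one residue
class modulo `ν`. -/
lemma coset_check {F : Type} [Field F] {n m ν : ℕ} {α : F} (hα : IsPrimitiveRoot α n)
    (hn : 0 < n) (hmν : n = m * ν) (c : Fin n → F) (s : ℕ)
    (h : ∀ l < ν, ∑ j : Fin n, c j * (α ^ (j : ℕ)) ^ (s + l * m) = 0) (i : ℕ) :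
    ∑ j ∈ (univ : Finset (Fin n)).filter (fun j : Fin n => (j : ℕ) % ν = i % ν),
      c j * (α ^ (j : ℕ)) ^ s = 0 := by
  have hα0 : α ≠ 0 := hα.ne_zero hn.ne'
  have hβ : IsPrimitiveRoot (α ^ m) ν := hα.pow hn hmν
  have hν : 0 < ν := Nat.pos_of_ne_zero fun h => by simp [hmν, h] at hn
  have hν0 : (ν : F) ≠ 0 := by
    have : NeZero n := ⟨hn.ne'⟩
    have h1 : ((n : ℕ) : F) ≠ 0 := (IsPrimitiveRoot.neZero' hα).out
    intro h0
    apply h1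
    rw [hmν, Nat.cast_mul, h0, mul_zero]
  have key : ∀ j : ℕ, ∑ l ∈ range ν, ((α ^ m) ^ j / (α ^ m) ^ i) ^ l
      = if j % ν = i % ν then (ν : F) else 0 := by
    intro j
    have hiff : (α ^ m) ^ j / (α ^ m) ^ i = 1 ↔ j % ν = i % ν := by
      rw [div_eq_one_iff_eq (pow_ne_zero _ (pow_ne_zero _ hα0)), ← pow_mod_orderOf _ j,
        ← pow_mod_orderOf _ i, ← hβ.eq_orderOf]
      exact ⟨hβ.pow_inj (Nat.mod_lt _ hν) (Nat.mod_lt _ hν), fun h => by rw [h]⟩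
    split_ifs with hji
    · simp [hiff.2 hji]
    · have hne : (α ^ m) ^ j / (α ^ m) ^ i ≠ 1 := fun h => hji (hiff.1 h)
      have hpow : ((α ^ m) ^ j / (α ^ m) ^ i) ^ ν = 1 := by
        rw [div_pow, ← pow_mul (α ^ m) j, ← pow_mul (α ^ m) i, mul_comm j, mul_comm i, pow_mul _ ν j,
          pow_mul _ ν i, hβ.pow_eq_one]
        simp
      rw [geom_sum_eq hne, hpow]
      simp
  have hsum : ∑ l ∈ range ν, ((α ^ m) ^ i)⁻¹ ^ l *
      ∑ j : Fin n, c j * (α ^ (j : ℕ)) ^ (s + l * m) = 0 :=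
    sum_eq_zero fun l hl => by rw [h l (mem_range.1 hl), mul_zero]
  simp_rw [mul_sum] at hsum
  rw [sum_comm] at hsum
  have hterm : ∀ j : Fin n, ∑ l ∈ range ν, ((α ^ m) ^ i)⁻¹ ^ l *
      (c j * (α ^ (j : ℕ)) ^ (s + l * m))
      = (ν : F) * (if (j : ℕ) % ν = i % ν then c j * (α ^ (j : ℕ)) ^ s else 0) := by
    intro j
    have : ∀ l, ((α ^ m) ^ i)⁻¹ ^ l * (c j * (α ^ (j : ℕ)) ^ (s + l * m))
        = c j * (α ^ (j : ℕ)) ^ s * ((α ^ m) ^ (j : ℕ) / (α ^ m) ^ i) ^ l := by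
      intro l
      rw [div_eq_mul_inv, mul_pow _ _ l, pow_add]
      ring
    simp_rw [this]
    rw [← mul_sum, key]
    split_ifs <;> ring
  simp_rw [hterm] at hsum
  rw [← mul_sum] at hsum
  rw [sum_filter]
  exact (mul_eq_zero.1 hsum).resolve_left hν0

/-- In a residue class modulo `ν` a coordinate is determined by its quotient, which lies in
`[a, m)`. -/
lemma card_coset_le {n m ν : ℕ} (hmν : n = m * ν) (S : Finset (Fin n)) (i a : ℕ)
    (hS : ∀ j ∈ S, (j : ℕ) % ν = i % ν ∧ a ≤ (j : ℕ) / ν) : S.card ≤ m - a := by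
  rw [← Nat.card_Ico]
  refine card_le_card_of_injOn (fun j : Fin n => (j : ℕ) / ν) ?_ ?_
  · intro j hj
    have := hS j hj
    simp only [coe_Ico, Set.mem_Ico]
    refine ⟨this.2, ?_⟩
    apply Nat.div_lt_of_lt_mul
    have := j.2
    rw [mul_comm]; omega
  · intro x hx y hy hxy
    apply Fin.ext
    have h1 := Nat.div_add_mod (x : ℕ) ν
    have h2 := Nat.div_add_mod (y : ℕ) ν
    have h3 := (hS x hx).1
    have h4 := (hS y hy).1
    simp only at hxy
    rw [← h1, ← h2, hxy, h3, h4]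

/-- With `m = r + d`, the exponents `t + 1 ∈ {1, …, n}` that avoid both `L` and `D` are those for
which `t` lies in one of the last `u` blocks of length `m`, outside the first `d` places. -/
lemma card_nonzeros {n m r d ν u : ℕ} (hm : m = r + d) (hr : 0 < r)
    (hmν : n = m * ν) (hu : u ≤ ν) :
    ((univ : Finset (Fin n)).filter fun t : Fin n =>
      ν - u ≤ (t : ℕ) / m ∧ d ≤ (t : ℕ) % m).card = u * r := by
  have hm0 : 0 < m := by omega
  have hcard : (Finset.Ico (ν - u) ν ×ˢ Finset.Ico d m).card = u * r := by
    rw [card_product, Nat.card_Ico, Nat.card_Ico]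
    congr 1 <;> omega
  rw [← hcard]
  refine card_bij (fun t _ => ((t : ℕ) / m, (t : ℕ) % m)) ?_ ?_ ?_
  · intro t ht
    have ht' := (mem_filter.1 ht).2
    simp only [mem_product, Finset.mem_Ico]
    exact ⟨⟨ht'.1, Nat.div_lt_of_lt_mul (hmν ▸ t.2)⟩, ht'.2, Nat.mod_lt _ hm0⟩
  · intro x _ y _ hxy
    simp only [Prod.mk.injEq] at hxy
    apply Fin.ext
    rw [← Nat.div_add_mod (x : ℕ) m, ← Nat.div_add_mod (y : ℕ) m, hxy.1, hxy.2]
  · rintro ⟨a, b⟩ hab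
    simp only [mem_product, Finset.mem_Ico] at hab
    have hlt : m * a + b < n := by
      have : m * (a + 1) ≤ m * ν := Nat.mul_le_mul_left _ hab.1.2
      rw [mul_add, mul_one] at this
      omega
    have hd : (m * a + b) / m = a := by
      rw [Nat.mul_add_div hm0, Nat.div_eq_of_lt hab.2.2, add_zero]
    have hmod : (m * a + b) % m = b := by
      rw [Nat.mul_add_mod, Nat.mod_eq_of_lt hab.2.2]
    refine ⟨⟨m * a + b, hlt⟩, ?_, ?_⟩
    · simp [hd, hmod, hab]; omega
    · simp [hd, hmod]

/-! ### Dimension, locality and minimum distance -/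

/-- The theorem in the parameters `d = δ - 1`, `k = r * u`, `n = (r + d) * ν`, in which no
subtraction truncates. -/
lemma code_params {F : Type} [Field F] {n m r d ν u : ℕ} {α : F}
    (hα : IsPrimitiveRoot α n) (hn : 0 < n) (hm : m = r + d) (hr : 0 < r)
    (hmν : n = m * ν) (hu : u ≤ ν) (hu0 : 0 < u) (Z : Set ℕ)
    (hZ : ∀ t, t ∈ Z ↔ (∃ l < ν, ∃ i, 1 ≤ i ∧ i ≤ d ∧ t = i + l * m) ∨
      (1 ≤ t ∧ t ≤ (ν - u) * m + d)) :
    Module.finrank F (zeroCode F n α Z) = u * r ∧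
    HasLocalityRD F (zeroCode F n α Z) r (d + 1) ∧
    minDistEq F (zeroCode F n α Z : Set (Fin n → F)) ((ν - u) * m + d + 1) := by
  have hm0 : 0 < m := by omega
  have hν0 : 0 < ν := by omega
  have hZle : ∀ t ∈ Z, 1 ≤ t ∧ t ≤ n := by
    intro t ht
    rcases (hZ t).1 ht with ⟨l, hl, i, h1, h2, rfl⟩ | ⟨h1, h2⟩
    · have : (l + 1) * m ≤ ν * m := Nat.mul_le_mul_right _ hl
      rw [add_mul, one_mul, mul_comm ν] at this
      omega
    · have : (ν - u + 1) * m ≤ ν * m := Nat.mul_le_mul_right _ (by omega)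
      rw [add_mul, one_mul, mul_comm ν] at this
      omega
  have hZmem : ∀ t : Fin n, ((t : ℕ) + 1 ∉ Z ↔ ν - u ≤ (t : ℕ) / m ∧ d ≤ (t : ℕ) % m) := by
    intro t
    have hdm := Nat.div_add_mod (t : ℕ) m
    have hml := Nat.mod_lt (t : ℕ) hm0
    have hdν : (t : ℕ) / m < ν := Nat.div_lt_of_lt_mul (hmν ▸ t.2)
    rw [hZ, mul_comm (ν - u)]
    constructor
    · intro h
      push Not at h
      have hmd : d ≤ (t : ℕ) % m := by
        by_contra! hlt
        refine h.1 _ hdν ((t : ℕ) % m + 1) (by omega) (by omega) ?_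
        rw [mul_comm ((t : ℕ) / m)]; omega
      refine ⟨?_, hmd⟩
      by_contra! hlt
      have := h.2 (by omega)
      have h3 : m * ((t : ℕ) / m + 1) ≤ m * (ν - u) := Nat.mul_le_mul_left _ hlt
      rw [mul_add, mul_one] at h3
      omega
    · rintro ⟨h1, h2⟩ (⟨l, hl, i, hi1, hi2, he⟩ | ⟨_, h4⟩)
      · have : (t : ℕ) = (i - 1) + l * m := by omega
        rw [this, Nat.add_mul_mod_self_right, Nat.mod_eq_of_lt (by omega)] at h2
        omega
      · have h3 : m * (ν - u) ≤ m * ((t : ℕ) / m) := Nat.mul_le_mul_left _ h1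
        omega
  have hdim : Module.finrank F (zeroCode F n α Z) = u * r := by
    rw [finrank_zeroCode hα hn Z hZle, ← card_nonzeros hm hr hmν hu]
    congr 1
    ext t
    simp [hZmem t]
  have hinj : ∀ i j : Fin n, α ^ (i : ℕ) = α ^ (j : ℕ) → i = j := fun i j hij =>
    Fin.ext (hα.pow_inj i.2 j.2 hij)
  have hne : ∀ j : Fin n, α ^ (j : ℕ) ≠ 0 := fun j => pow_ne_zero _ (hα.ne_zero hn.ne')
  have hloc : ∀ c ∈ zeroCode F n α Z, ∀ i s : ℕ, 1 ≤ s → s ≤ d →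
      ∑ j ∈ (univ : Finset (Fin n)).filter (fun j : Fin n => (j : ℕ) % ν = i % ν),
        c j * (α ^ (j : ℕ)) ^ s = 0 := by
    intro c hc i s h1 h2
    refine coset_check hα hn hmν c s (fun l hl => ?_) i
    exact mem_zeroCode.1 hc _ ((hZ _).2 (Or.inl ⟨l, hl, s, h1, h2, rfl⟩))
  have hge : minDistGE F (zeroCode F n α Z : Set (Fin n → F)) ((ν - u) * m + d + 1) := by
    intro c hc hc0
    obtain ⟨j₀, hj₀⟩ := Function.ne_iff.1 hc0
    have := bch_bound univ (fun j : Fin n => α ^ (j : ℕ)) c (fun i _ j _ => hinj i j)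
      (fun j _ => hne j) ((ν - u) * m + d)
      (fun s h1 h2 => mem_zeroCode.1 hc s ((hZ s).2 (Or.inr ⟨h1, h2⟩))) j₀ (mem_univ _) hj₀
    unfold hammingNorm
    convert this
  refine ⟨hdim, ?_, hge, ?_⟩
  · intro i
    refine ⟨univ.filter fun j : Fin n => (j : ℕ) % ν = (i : ℕ) % ν, by simp, ?_, ?_⟩
    · have := card_coset_le hmν (univ.filter fun j : Fin n => (j : ℕ) % ν = (i : ℕ) % ν) i 0
        (by simp)
      omega
    · rintro _ ⟨c, hc, rfl⟩ hc0
      obtain ⟨j₀, hj₀⟩ := Function.ne_iff.1 hc0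
      have := bch_bound univ
        (fun j : ↥(univ.filter fun j : Fin n => (j : ℕ) % ν = (i : ℕ) % ν) => α ^ ((j : Fin n) : ℕ))
        (LinearMap.funLeft F F Subtype.val c) (fun i _ j _ h => Subtype.ext (hinj i j h))
        (fun j _ => hne j) d
        (fun s h1 h2 => by
          rw [← hloc c hc i s h1 h2]
          exact sum_coe_sort _ (fun j : Fin n => c j * (α ^ (j : ℕ)) ^ s)) j₀ (mem_univ _) hj₀
      unfold hammingNorm
      convert this
  · -- The `k - 1` prescribed zeros: `a` stands for place `a % r` in residue class `a / r`.
    have hpos : ∀ a : Fin (u * r - 1), (a : ℕ) / r + ν * ((a : ℕ) % r) < n := by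
      intro a
      have h1 : (a : ℕ) / r < ν :=
        lt_of_lt_of_le (Nat.div_lt_of_lt_mul (by have := a.2; rw [mul_comm r]; omega)) hu
      have h2 : ν * ((a : ℕ) % r + 1) ≤ ν * m :=
        Nat.mul_le_mul_left _ (by have := Nat.mod_lt (a : ℕ) hr; omega)
      rw [mul_add, mul_one, mul_comm ν m] at h2
      omega
    let Ψ : zeroCode F n α Z →ₗ[F] (Fin (u * r - 1) → F) :=
      (LinearMap.funLeft F F fun a => (⟨_, hpos a⟩ : Fin n)) ∘ₗ (zeroCode F n α Z).subtype
    have hur : 0 < u * r := Nat.mul_pos hu0 hr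
    obtain ⟨⟨c, hc⟩, hcker, hc0⟩ := (Submodule.ne_bot_iff _).1
      (LinearMap.ker_ne_bot_of_finrank_lt (f := Ψ) (by
        rw [hdim, Module.finrank_fintype_fun_eq_card, Fintype.card_fin]; omega))
    have hc0' : c ≠ 0 := fun h => hc0 (by ext1; exact h)
    have hzero : ∀ l s : ℕ, s < r → l * r + s < u * r - 1 → ∀ j : Fin n,
        (j : ℕ) = l + ν * s → c j = 0 := by
      intro l s hs hls j hj
      have := congrFun (LinearMap.mem_ker.1 hcker) ⟨l * r + s, hls⟩
      have e1 : (l * r + s) / r = l := by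
        rw [mul_comm l r, Nat.mul_add_div hr, Nat.div_eq_of_lt hs, add_zero]
      have e2 : (l * r + s) % r = s := by
        rw [mul_comm l r, Nat.mul_add_mod, Nat.mod_eq_of_lt hs]
      simp only [Ψ, LinearMap.comp_apply, Submodule.subtype_apply, LinearMap.funLeft_apply,
        Pi.zero_apply, e1, e2] at this
      rwa [show j = ⟨l + ν * s, hj ▸ j.2⟩ from Fin.ext hj]
    have hur1 : (u - 1) * r + r = u * r := by
      rw [← Nat.succ_mul, Nat.succ_eq_add_one, Nat.sub_add_cancel hu0]
    have hfull : ∀ j : Fin n, (j : ℕ) % ν < u - 1 → c j = 0 := by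
      intro j₀ hj₀
      by_contra hcj
      have h1 := bch_bound (univ.filter fun j : Fin n => (j : ℕ) % ν = (j₀ : ℕ) % ν)
        (fun j : Fin n => α ^ (j : ℕ)) c (fun i _ j _ => hinj i j) (fun j _ => hne j) d
        (hloc c hc j₀) j₀ (by simp) hcj
      have h2 := card_coset_le hmν
        ((univ.filter fun j : Fin n => (j : ℕ) % ν = (j₀ : ℕ) % ν).filter fun j => c j ≠ 0)
        j₀ r (by
          intro j hj
          simp only [mem_filter, mem_univ, true_and] at hj
          refine ⟨hj.1, ?_⟩
          by_contra! hlt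
          refine hj.2 (hzero ((j : ℕ) % ν) ((j : ℕ) / ν) hlt ?_ j (Nat.mod_add_div _ _).symm)
          have : ((j : ℕ) % ν + 1) * r ≤ (u - 1) * r := Nat.mul_le_mul_right _ (by omega)
          rw [add_mul, one_mul] at this
          omega)
      omega
    have hlast : ∀ j : Fin n, (j : ℕ) % ν = u - 1 → (j : ℕ) / ν < r - 1 → c j = 0 := by
      intro j h1 h2
      exact hzero (u - 1) ((j : ℕ) / ν) (by omega) (by omega) j
        (by rw [← h1]; exact (Nat.mod_add_div _ _).symm)
    have hle : (univ.filter fun j : Fin n => c j ≠ 0).card ≤ (ν - u) * m + d + 1 := by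
      have hcard : (Finset.Ico u ν ×ˢ range m ∪ {u - 1} ×ˢ Finset.Ico (r - 1) m).card
          ≤ (ν - u) * m + d + 1 := by
        refine (card_union_le _ _).trans ?_
        simp only [card_product, Nat.card_Ico, card_range, card_singleton, one_mul]
        omega
      refine le_trans ?_ hcard
      refine card_le_card_of_injOn (fun j : Fin n => ((j : ℕ) % ν, (j : ℕ) / ν)) ?_ ?_
      · intro j hj
        have hcj : c j ≠ 0 := (mem_filter.1 (mem_coe.1 hj)).2
        have h1 : ¬ (j : ℕ) % ν < u - 1 := fun h => hcj (hfull j h)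
        have h2 : (j : ℕ) % ν = u - 1 → ¬ (j : ℕ) / ν < r - 1 := fun h h' => hcj (hlast j h h')
        have h3 := Nat.mod_lt (j : ℕ) hν0
        have h4 : (j : ℕ) / ν < m := Nat.div_lt_of_lt_mul (by rw [mul_comm]; exact hmν ▸ j.2)
        simp only [mem_coe, mem_union, mem_product, Finset.mem_Ico, mem_range, mem_singleton]
        omega
      · intro x _ y _ hxy
        simp only [Prod.mk.injEq] at hxy
        apply Fin.ext
        rw [← Nat.div_add_mod (x : ℕ) ν, ← Nat.div_add_mod (y : ℕ) ν, hxy.1, hxy.2]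
    refine ⟨c, hc, hc0', le_antisymm ?_ (hge c hc hc0')⟩
    unfold hammingNorm
    convert hle

end LRC

/-- Optimal cyclic codes with `(r,δ)` locality. -/
theorem statement2 (q n k r δ : ℕ) (F : Type) [Field F] [Fintype F]
    (hq : ∃ p s : ℕ, p.Prime ∧ 0 < s ∧ q = p ^ s)
    (hcard : Fintype.card F = q)
    (hδ : 2 ≤ δ) (hn : 0 < n) (hk : 0 < k) (hr : 0 < r)
    (hrk : r ∣ k) (hm : (r + δ - 1) ∣ n) (hkn : k / r * (r + δ - 1) ≤ n)
    (hnq : n ∣ q - 1)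
    (α : F) (hα : IsPrimitiveRoot α n)
    (Z : Set ℕ)
    (hZ : Z = {t | ∃ l < n / (r + δ - 1), ∃ i, 1 ≤ i ∧ i ≤ δ - 1 ∧
                    t = i + l * (r + δ - 1)} ∪
              {t | 1 ≤ t ∧ t ≤ n - k - (k / r - 1) * (δ - 1)})
    (C : Submodule F (Fin n → F)) (hC : C = LRC.zeroCode F n α Z) :
    Module.finrank F C = k ∧
    LRC.HasLocalityRD F C r δ ∧
    LRC.minDistEq F (C : Set (Fin n → F)) (n - k + δ - k / r * (δ - 1)) := by
  obtain ⟨u, rfl⟩ := hrk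
  obtain ⟨ν, hν⟩ := hm
  obtain ⟨d, rfl⟩ : ∃ d, δ = d + 1 := ⟨δ - 1, by omega⟩
  have hm' : r + (d + 1) - 1 = r + d := by omega
  have hm0 : 0 < r + d := by omega
  have hu0 : 0 < u := Nat.pos_of_mul_pos_left hk
  have hdiv : r * u / r = u := Nat.mul_div_cancel_left _ hr
  have hd1 : d + 1 - 1 = d := by omega
  rw [hm'] at hν
  have hdivn : n / (r + d) = ν := by rw [hν, Nat.mul_div_cancel_left _ hm0]
  rw [hdiv, hm'] at hkn
  have hu : u ≤ ν := by
    refine Nat.le_of_mul_le_mul_left (c := r + d) ?_ hm0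
    rw [mul_comm, ← hν]; exact hkn
  obtain ⟨v, rfl⟩ := Nat.exists_eq_add_of_le hu
  obtain ⟨w, rfl⟩ : ∃ w, u = w + 1 := ⟨u - 1, by omega⟩
  -- The two truncated subtractions of the statement, evaluated.
  have hN : n - r * (w + 1) - (w + 1 - 1) * d = v * (r + d) + d := by
    have : n = v * (r + d) + d + w * d + r * (w + 1) := by rw [hν]; ring
    rw [this, Nat.add_sub_cancel, Nat.add_sub_cancel, Nat.add_sub_cancel]
  have hD : n - r * (w + 1) + (d + 1) - (w + 1) * d = v * (r + d) + d + 1 := by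
    have : n = v * (r + d) + (w + 1) * d + r * (w + 1) := by rw [hν]; ring
    rw [this, Nat.add_sub_cancel]
    omega
  have hv : w + 1 + v - (w + 1) = v := by omega
  have := LRC.code_params (u := w + 1) hα hn rfl hr hν hu hu0 Z (fun t => by
    rw [hZ, hm', hdivn, hdiv, hd1, hN, hv]; rfl)
  rw [hv] at this
  rw [hC, hdiv, hd1, hD, mul_comm r]
  exact this
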